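/- arXiv:2310.08136 — 7 statements merged into one kernel-verified Lean document; each statement's English description precedes it below -/
import Mathlib

section
/- Let f : ℂ² → ℂ² be complex entire and real for real arguments, let v ∈ ℂ² be a real point with f(v) = 0, and suppose the derivative Df(v) has one real negative eigenvalue μ⁻ < 0 and one real positive eigenvalue μ⁺ > 0 (a hyperbolic saddle). Then every complex entire function Γ : ℂ → ℂ² which is real for real arguments, satisfies Γ'(t) = f(Γ(t)) for all t ∈ ℂ, and satisfies Γ(σ) → v as the real variable σ → ±∞, is constant equal to v. (This is the planar case N = 2 of the nonexistence of complex entire homoclinic orbits: for a planar saddle the eigenvalues are automatically real and nonresonant.) -/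
/-- A point of `ℂ²` is real if every coordinate has zero imaginary part. -/
def IsRealPt (x : EuclideanSpace ℂ (Fin 2)) : Prop := ∀ j, (x j).im = 0

lemma gron {φ φ' u u' : ℝ → ℝ} {T : ℝ}
    (hφ : ∀ s, T ≤ s → HasDerivAt φ (φ' s) s) (hu : ∀ s, T ≤ s → HasDerivAt u (u' s) s)
    (h : ∀ s, T ≤ s → u' s * φ s ≤ φ' s) {s t : ℝ} (hs : T ≤ s) (hst : s ≤ t) :
    φ s * Real.exp (-u s) ≤ φ t * Real.exp (-u t) := by
  have hd : ∀ s, T ≤ s → HasDerivAt (fun s => φ s * Real.exp (-u s))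
      (φ' s * Real.exp (-u s) + φ s * (Real.exp (-u s) * (-u' s))) s := fun s hs =>
    (hφ s hs).mul ((hu s hs).neg.exp)
  have hm : MonotoneOn (fun s => φ s * Real.exp (-u s)) (Set.Ici T) := by
    apply monotoneOn_of_deriv_nonneg (convex_Ici T)
    · exact fun s hs => (hd s hs).continuousAt.continuousWithinAt
    · intro s hs
      rw [interior_Ici] at hs
      exact (hd s (le_of_lt hs)).differentiableAt.differentiableWithinAt
    · intro s hs
      rw [interior_Ici] at hs
      rw [(hd s (le_of_lt hs)).deriv]
      have := h s (le_of_lt hs)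
      have e := Real.exp_pos (-u s)
      nlinarith
  exact hm hs (hs.trans hst) hst

lemma nsq {X P : ℝ → ℂ} {a T : ℝ}
    (hX : ∀ s, T ≤ s → HasDerivAt X ((a : ℂ) * X s + P s) s) (s : ℝ) (hs : T ≤ s) :
    HasDerivAt (fun s => ‖X s‖ ^ 2) (2 * a * ‖X s‖ ^ 2 + 2 * inner ℝ (X s) (P s)) s := by
  have := (hX s hs).norm_sq
  convert this using 1
  rw [inner_add_right, show (a : ℂ) * X s = a • X s by simp, inner_smul_right,
    real_inner_self_eq_norm_sq]
  ring

lemma cone {X Y P Q : ℝ → ℂ} {α β m T B : ℝ} (hm : 0 < m) (hα : m ≤ α) (hβ : m ≤ β)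
    (hX : ∀ s, T ≤ s → HasDerivAt X (((-α : ℝ) : ℂ) * X s + P s) s)
    (hY : ∀ s, T ≤ s → HasDerivAt Y ((β : ℂ) * Y s + Q s) s)
    (hP : ∀ s, T ≤ s → ‖P s‖ ≤ m / 4 * max ‖X s‖ ‖Y s‖)
    (hQ : ∀ s, T ≤ s → ‖Q s‖ ≤ m / 4 * max ‖X s‖ ‖Y s‖)
    (hB : ∀ s, T ≤ s → ‖Y s‖ ≤ B) (s : ℝ) (hs : T ≤ s) : ‖Y s‖ ≤ ‖X s‖ := by
  by_contra! hc
  have hφ : ∀ s, T ≤ s → HasDerivAt (fun s => ‖Y s‖ ^ 2 - ‖X s‖ ^ 2)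
      ((2 * β * ‖Y s‖ ^ 2 + 2 * inner ℝ (Y s) (Q s)) -
       (2 * (-α) * ‖X s‖ ^ 2 + 2 * inner ℝ (X s) (P s))) s := fun s hs =>
    (nsq hY s hs).sub (nsq hX s hs)
  have key := fun t (ht : s ≤ t) => gron hφ (u := fun s => m * s) (u' := fun _ => m)
    (fun s _ => by simpa using (hasDerivAt_id s).const_mul m) (by
      intro s hs
      have h1 := abs_le.1 (abs_real_inner_le_norm (Y s) (Q s))
      have h2 := abs_le.1 (abs_real_inner_le_norm (X s) (P s))
      have x0 := norm_nonneg (X s)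
      have y0 := norm_nonneg (Y s)
      have hM : max ‖X s‖ ‖Y s‖ ^ 2 ≤ ‖X s‖ ^ 2 + ‖Y s‖ ^ 2 := by
        rcases max_choice ‖X s‖ ‖Y s‖ with h | h <;> rw [h] <;> nlinarith
      have hxM := le_max_left ‖X s‖ ‖Y s‖
      have hyM := le_max_right ‖X s‖ ‖Y s‖
      have hP := hP s hs
      have hQ := hQ s hs
      generalize max ‖X s‖ ‖Y s‖ = M at *
      have h3 : ‖Y s‖ * ‖Q s‖ ≤ M * (m / 4 * M) := by gcongr; linarith
      have h4 : ‖X s‖ * ‖P s‖ ≤ M * (m / 4 * M) := by gcongr; linarith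
      have h5 : m * ‖Y s‖ ^ 2 ≤ β * ‖Y s‖ ^ 2 := by gcongr
      have h6 : m * ‖X s‖ ^ 2 ≤ α * ‖X s‖ ^ 2 := by gcongr
      have h7 : m * M ^ 2 ≤ m * (‖X s‖ ^ 2 + ‖Y s‖ ^ 2) := by gcongr
      have h8 : 0 ≤ m * ‖X s‖ ^ 2 := by positivity
      linarith) hs ht

  set c := (‖Y s‖ ^ 2 - ‖X s‖ ^ 2) * Real.exp (-(m * s)) with hcdef
  have hc0 : 0 < c := by
    apply mul_pos _ (Real.exp_pos _)
    have := norm_nonneg (X s)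
    nlinarith
  have lim : Filter.Tendsto (fun t : ℝ => B ^ 2 * Real.exp (-(m * t))) Filter.atTop (nhds (B ^ 2 * 0)) := by
    apply Filter.Tendsto.const_mul
    exact Real.tendsto_exp_neg_atTop_nhds_zero.comp (Filter.tendsto_id.const_mul_atTop hm)
  have : c ≤ B ^ 2 * 0 := by
    apply ge_of_tendsto lim
    filter_upwards [Filter.eventually_ge_atTop s] with t ht
    refine (key t ht).trans ?_
    have : ‖Y t‖ ^ 2 ≤ B ^ 2 := by
      have := hB t (hs.trans ht)
      gcongr
    gcongr
    have := sq_nonneg ‖X t‖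
    linarith
  linarith

lemma decay {X P : ℝ → ℂ} {α T : ℝ}
    (hX : ∀ s, T ≤ s → HasDerivAt X (((-α : ℝ) : ℂ) * X s + P s) s)
    (hP : ∀ s, T ≤ s → ‖P s‖ ≤ α / 4 * ‖X s‖) :
    ∃ C > 0, ∀ s, T ≤ s → ‖X s‖ ≤ C * Real.exp (-(3 * α / 4 * s)) := by
  refine ⟨‖X T‖ * Real.exp (3 * α / 4 * T) + 1, by positivity, fun s hs => ?_⟩
  have key := gron (φ := fun s => -‖X s‖ ^ 2) (fun s hs => (nsq hX s hs).neg)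
    (u := fun s => -(3 * α / 2) * s) (u' := fun _ => -(3 * α / 2))
    (fun s _ => by simpa using (hasDerivAt_id s).const_mul (-(3 * α / 2))) (by
      intro s hs
      have h2 := abs_le.1 (abs_real_inner_le_norm (X s) (P s))
      have h3 : ‖X s‖ * ‖P s‖ ≤ ‖X s‖ * (α / 4 * ‖X s‖) := by gcongr; exact hP s hs
      nlinarith) le_rfl hs

  have e1 : ∀ t, Real.exp (-(-(3 * α / 2) * t)) = Real.exp (3 * α / 4 * t) ^ 2 := by
    intro t; rw [← Real.exp_nat_mul]; congr 1; push_cast; ring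
  rw [e1, e1] at key
  have h : ‖X s‖ * Real.exp (3 * α / 4 * s) ≤ ‖X T‖ * Real.exp (3 * α / 4 * T) := by
    apply le_of_sq_le_sq _ (by positivity)
    nlinarith
  rw [Real.exp_neg, ← div_eq_mul_inv, le_div_iff₀ (Real.exp_pos _)]
  linarith

lemma lowerb {X P : ℝ → ℂ} {α T C κ : ℝ} (hκ : 0 < κ) (hC : 0 ≤ C)
    (hX : ∀ s, T ≤ s → HasDerivAt X (((-α : ℝ) : ℂ) * X s + P s) s)
    (hP : ∀ s, T ≤ s → ‖P s‖ ≤ C * Real.exp (-(κ * s)) * ‖X s‖)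
    (hlim : Filter.Tendsto (fun s => ‖X s‖ * Real.exp (α * s)) Filter.atTop (nhds 0))
    (s : ℝ) (hs : T ≤ s) : X s = 0 := by
  have key := fun t (ht : s ≤ t) => gron (fun s hs => nsq hX s hs)
    (u := fun s => -(2 * α) * s + 2 * C / κ * Real.exp (-(κ * s)))
    (u' := fun s => -(2 * α) - 2 * C * Real.exp (-(κ * s)))
    (fun s _ => by
      have h1 := (hasDerivAt_id s).const_mul (-(2 * α))
      have h2 := (((hasDerivAt_id s).const_mul κ).neg.exp).const_mul (2 * C / κ)
      refine (h1.add h2).congr_deriv ?_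
      have h3 : 2 * C / κ * κ = 2 * C := by field_simp
      simp only [id, mul_one, Pi.neg_apply]
      linear_combination (-Real.exp (-(κ * s))) * h3) (by
      intro s hs
      have h2 := abs_le.1 (abs_real_inner_le_norm (X s) (P s))
      have h3 : ‖X s‖ * ‖P s‖ ≤ ‖X s‖ * (C * Real.exp (-(κ * s)) * ‖X s‖) := by
        gcongr; exact hP s hs
      nlinarith) hs ht

  have lim2 : Filter.Tendsto (fun s => (‖X s‖ * Real.exp (α * s)) ^ 2) Filter.atTop (nhds (0 ^ 2)) :=
    hlim.pow 2
  have : ‖X s‖ ^ 2 * Real.exp (-(-(2 * α) * s + 2 * C / κ * Real.exp (-(κ * s)))) ≤ 0 ^ 2 := by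
    apply ge_of_tendsto lim2
    filter_upwards [Filter.eventually_ge_atTop s] with t ht
    refine (key t ht).trans ?_
    rw [mul_pow, ← Real.exp_nat_mul]
    gcongr
    push_cast
    have : 0 ≤ 2 * C / κ * Real.exp (-(κ * t)) := by positivity
    linarith
  by_contra hne
  have : 0 < ‖X s‖ := norm_pos_iff.2 hne
  have : 0 < ‖X s‖ ^ 2 * Real.exp (-(-(2 * α) * s + 2 * C / κ * Real.exp (-(κ * s)))) := by positivity
  linarith

lemma quad_lip {E : Type*} [NormedAddCommGroup E] [NormedSpace ℂ E] (N : E → E)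
    (hN : Differentiable ℂ N) (h0 : fderiv ℂ N 0 = 0) (hN0 : N 0 = 0) :
    ∃ K > 0, ∃ r > 0, ∀ z z' : E, ‖z‖ ≤ r → ‖z'‖ ≤ r →
      ‖N z - N z'‖ ≤ K * max ‖z‖ ‖z'‖ * ‖z - z'‖ := by
  obtain ⟨R, hR, hb⟩ : ∃ R > 0, ∀ z, ‖z‖ < R → ‖N z‖ < 1 := by
    have := Metric.continuousAt_iff.1 (hN.continuous.continuousAt (x := (0 : E))) 1 one_pos
    simpa [hN0] using this
  set r := R / 4 with hr
  have hr0 : 0 < r := by positivity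
  -- directional Cauchy estimate
  have cau : ∀ (F : E → E) (hF : Differentiable ℂ F) (z : E) (C : ℝ), 0 ≤ C →
      (∀ w, ‖w‖ ≤ r → ‖F (z + w)‖ ≤ C) → ‖fderiv ℂ F z‖ ≤ C / r := by
    intro F hF z C hC hw
    refine ContinuousLinearMap.opNorm_le_of_unit_norm (by positivity) ?_
    intro e he
    have hd : HasDerivAt (fun ζ : ℂ => F (z + ζ • e)) (fderiv ℂ F z e) 0 := by
      have h1 : HasDerivAt (fun ζ : ℂ => z + ζ • e) e 0 := by
        simpa using ((hasDerivAt_id (0 : ℂ)).smul_const e).const_add z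
      have h2 : HasFDerivAt F (fderiv ℂ F z) (z + (0 : ℂ) • e) := by
        simpa using (hF z).hasFDerivAt
      exact h2.comp_hasDerivAt (0 : ℂ) h1
    rw [← hd.deriv]
    apply Complex.norm_deriv_le_of_forall_mem_sphere_norm_le hr0
    · have : Differentiable ℂ (fun ζ : ℂ => F (z + ζ • e)) := by fun_prop
      exact this.diffContOnCl
    · intro ζ hζ
      apply hw
      have : ‖ζ‖ = r := by simpa using hζ
      rw [norm_smul, he, this, mul_one]
  have lip : ∀ z z' : E, ‖z‖ ≤ 2 * r → ‖z'‖ ≤ 2 * r → ‖N z - N z'‖ ≤ 1 / r * ‖z - z'‖ := by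
    intro z z' hz hz'
    apply (convex_closedBall (0 : E) (2 * r)).norm_image_sub_le_of_norm_fderiv_le (𝕜 := ℂ)
      (fun x _ => hN x) _ (by simpa using hz') (by simpa using hz)
    intro x hx
    apply cau N hN x 1 zero_le_one
    intro w hw
    refine (hb _ ?_).le
    have := norm_add_le x w
    have : ‖x‖ ≤ 2 * r := by simpa using hx
    linarith
  have d2 : ∀ z : E, ‖z‖ ≤ r → ‖fderiv ℂ N z‖ ≤ 1 / r ^ 2 * ‖z‖ := by
    intro z hz
    have hd : Differentiable ℂ (fun w => N (z + w) - N w) := by fun_prop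
    have h := cau (fun w => N (z + w) - N w) hd 0 (1 / r * ‖z‖) (by positivity) (by
      intro w hw
      simp only [zero_add]
      have := lip (z + w) w ((norm_add_le _ _).trans (by linarith)) (by linarith)
      simpa using this)
    have e : fderiv ℂ (fun w => N (z + w) - N w) 0 = fderiv ℂ N z := by
      rw [fderiv_fun_sub (by fun_prop) (by fun_prop), h0, sub_zero, fderiv_comp_add_left, add_zero]
    rw [e] at h
    refine h.trans (le_of_eq ?_)
    field_simp
  refine ⟨1 / r ^ 2, by positivity, r, hr0, fun z z' hz hz' => ?_⟩
  apply (convex_closedBall (0 : E) (max ‖z‖ ‖z'‖)).norm_image_sub_le_of_norm_fderiv_le (𝕜 := ℂ)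
      (fun x _ => hN x) _ (by simp) (by simp)
  intro x hx
  have hx' : ‖x‖ ≤ max ‖z‖ ‖z'‖ := by simpa using hx
  refine (d2 x (hx'.trans (max_le hz hz'))).trans ?_
  gcongr

lemma core (α β : ℝ) (hα : 0 < α) (hβ : 0 < β) (N : ℂ × ℂ → ℂ × ℂ)
    (hN : Differentiable ℂ N) (h0 : fderiv ℂ N 0 = 0) (hN0 : N 0 = 0) (Z : ℂ → ℂ × ℂ)
    (hZ : ∀ t, HasDerivAt Z ((((-α : ℝ) : ℂ) * (Z t).1, (β : ℂ) * (Z t).2) + N (Z t)) t)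
    (hlim : Filter.Tendsto (fun σ : ℝ => Z σ) Filter.atTop (nhds 0)) :
    ∃ P : ℝ, 0 < P ∧ ∃ T M : ℝ, (∀ t, Z (t + P * Complex.I) = Z t) ∧
      ∀ t : ℂ, T ≤ t.re → ‖Z t‖ ≤ M := by
  obtain ⟨K, hK, r, hr, hq⟩ := quad_lip N hN h0 hN0
  obtain ⟨m, hm, hmα, hmβ⟩ : ∃ m, 0 < m ∧ m ≤ α ∧ m ≤ β :=
    ⟨min α β, lt_min hα hβ, min_le_left _ _, min_le_right _ _⟩
  obtain ⟨δ, hδ, hδr, hδK⟩ : ∃ δ, 0 < δ ∧ δ ≤ r ∧ K * δ ≤ m / 4 := by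
    refine ⟨min r (m / 4 / K), lt_min hr (by positivity), min_le_left _ _, ?_⟩
    calc K * min r (m / 4 / K) ≤ K * (m / 4 / K) := by gcongr; exact min_le_right _ _
      _ = m / 4 := by field_simp
  have hZ1 : ∀ t, HasDerivAt (fun t => (Z t).1) (((-α : ℝ) : ℂ) * (Z t).1 + (N (Z t)).1) t :=
    fun t => by
      have := (ContinuousLinearMap.fst ℂ ℂ ℂ).hasFDerivAt.comp_hasDerivAt t (hZ t)
      exact this
  have hZ2 : ∀ t, HasDerivAt (fun t => (Z t).2) ((β : ℂ) * (Z t).2 + (N (Z t)).2) t :=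
    fun t => by
      have := (ContinuousLinearMap.snd ℂ ℂ ℂ).hasFDerivAt.comp_hasDerivAt t (hZ t)
      exact this
  have hrealline : ∀ (c : ℂ) (s : ℝ), HasDerivAt (fun s : ℝ => (s : ℂ) + c) 1 s := fun c s =>
    (Complex.ofRealCLM.hasDerivAt (x := s)).add_const c
  have hR1 : ∀ (c : ℂ) (s : ℝ), HasDerivAt (fun s : ℝ => (Z (s + c)).1)
      (((-α : ℝ) : ℂ) * (Z (s + c)).1 + (N (Z (s + c))).1) s := fun c s => by
    exact ((hZ1 (s + c)).scomp s (hrealline c s)).congr_deriv (one_smul _ _)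
  have hR2 : ∀ (c : ℂ) (s : ℝ), HasDerivAt (fun s : ℝ => (Z (s + c)).2)
      ((β : ℂ) * (Z (s + c)).2 + (N (Z (s + c))).2) s := fun c s => by
    exact ((hZ2 (s + c)).scomp s (hrealline c s)).congr_deriv (one_smul _ _)
  obtain ⟨T0, hT0⟩ : ∃ T0 : ℝ, ∀ s : ℝ, T0 ≤ s → ‖Z s‖ ≤ δ := by
    have : ∀ᶠ s : ℝ in Filter.atTop, ‖Z s‖ < δ := by
      have := hlim.norm
      rw [norm_zero] at this
      exact this.eventually_lt_const hδ
    obtain ⟨T0, h⟩ := Filter.eventually_atTop.1 this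
    exact ⟨T0, fun s hs => (h s hs).le⟩
  have hN1 : ∀ z, ‖z‖ ≤ r → ‖N z‖ ≤ K * ‖z‖ * ‖z‖ := fun z hz => by
    have := hq z 0 hz (by simpa using hr.le)
    simpa [hN0] using this
  have hNδ : ∀ z, ‖z‖ ≤ δ → ‖N z‖ ≤ m / 4 * ‖z‖ := fun z hz => by
    refine (hN1 z (hz.trans hδr)).trans ?_
    gcongr
    refine le_trans ?_ hδK
    gcongr
  have hc0 : ∀ s : ℝ, T0 ≤ s → ‖(Z s).2‖ ≤ ‖(Z s).1‖ := by
    intro s hs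
    have := cone (X := fun s : ℝ => (Z (s + 0)).1) (Y := fun s : ℝ => (Z (s + 0)).2) (B := δ)
      hm hmα hmβ (fun s _ => hR1 0 s) (fun s _ => hR2 0 s)
      (fun s hs => by
        rw [add_zero]
        exact (norm_fst_le _).trans (hNδ _ (hT0 s hs)))
      (fun s hs => by
        rw [add_zero]
        exact (norm_snd_le _).trans (hNδ _ (hT0 s hs)))
      (fun s hs => by
        rw [add_zero]
        exact (norm_snd_le _).trans (hT0 s hs)) s hs
    simpa using this
  have hZX : ∀ s : ℝ, T0 ≤ s → ‖Z s‖ = ‖(Z s).1‖ := fun s hs => by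
    rw [Prod.norm_def, max_eq_left (hc0 s hs)]
  obtain ⟨C, hC, hdec⟩ := decay (T := T0) (fun s _ => hR1 0 s) (fun s hs => by
    rw [add_zero, ← hZX s hs]
    refine (norm_fst_le _).trans ((hNδ _ (hT0 s hs)).trans ?_)
    gcongr)
  simp only [add_zero] at hdec
  set P : ℝ := 2 * Real.pi / α with hP
  have hP0 : 0 < P := by have := Real.pi_pos; positivity
  set Λ : ℝ := α + β + K * r + 1 with hΛ
  have hΛ0 : 0 < Λ := by positivity
  set C' := C * Real.exp (Λ * P) with hC'
  have hC'0 : 0 < C' := by positivity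
  set κ := 3 * α / 4 with hκ
  have hκ0 : 0 < κ := by positivity
  have hexp0 : Filter.Tendsto (fun s : ℝ => C' * Real.exp (-(κ * s))) Filter.atTop (nhds 0) := by
    have : Filter.Tendsto (fun s : ℝ => C' * Real.exp (-(κ * s))) Filter.atTop (nhds (C' * 0)) := by
      apply Filter.Tendsto.const_mul
      exact Real.tendsto_exp_neg_atTop_nhds_zero.comp (Filter.tendsto_id.const_mul_atTop hκ0)
    simpa using this
  obtain ⟨T1, hT1, hT01⟩ : ∃ T1 : ℝ, (∀ s : ℝ, T1 ≤ s → C' * Real.exp (-(κ * s)) ≤ δ) ∧ T0 ≤ T1 := by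
    obtain ⟨T, h⟩ := Filter.eventually_atTop.1 (hexp0.eventually_lt_const hδ)
    exact ⟨max T T0, fun s hs => (h s ((le_max_left _ _).trans hs)).le, le_max_right _ _⟩
  have hvert : ∀ (s x : ℝ), HasDerivAt (fun x : ℝ => (s : ℂ) + x * Complex.I) Complex.I x :=
    fun s x => by
      simpa using ((Complex.ofRealCLM.hasDerivAt (x := x)).mul_const Complex.I).const_add (s : ℂ)
  have strip : ∀ s : ℝ, T1 ≤ s → ∀ x ∈ Set.Icc 0 P,
      ‖Z (s + x * Complex.I)‖ ≤ C' * Real.exp (-(κ * s)) := by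
    intro s hs x hx
    have hd : ∀ x : ℝ, HasDerivAt (fun x : ℝ => Z (s + x * Complex.I))
        (Complex.I • ((((-α : ℝ) : ℂ) * (Z (s + x * Complex.I)).1,
          (β : ℂ) * (Z (s + x * Complex.I)).2) + N (Z (s + x * Complex.I)))) x := fun x =>
      (hZ (s + x * Complex.I)).scomp x (hvert s x)
    have hmono : ∀ x ∈ Set.Icc 0 P, C * Real.exp (-(κ * s)) * Real.exp (Λ * x) ≤
        C' * Real.exp (-(κ * s)) := by
      intro x hx
      calc C * Real.exp (-(κ * s)) * Real.exp (Λ * x)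
          ≤ C * Real.exp (-(κ * s)) * Real.exp (Λ * P) := by gcongr; exact hx.2
        _ = C' * Real.exp (-(κ * s)) := by rw [hC']; ring
    refine (image_norm_le_of_norm_deriv_right_lt_deriv_boundary
      (fun x _ => (hd x).continuousAt.continuousWithinAt)
      (fun x _ => (hd x).hasDerivWithinAt)
      (B := fun x => C * Real.exp (-(κ * s)) * Real.exp (Λ * x))
      (B' := fun x => Λ * (C * Real.exp (-(κ * s)) * Real.exp (Λ * x))) ?_ ?_ ?_ hx).trans
      (hmono x hx)
    · simp only [Complex.ofReal_zero, zero_mul, add_zero, mul_zero, Real.exp_zero, mul_one]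
      rw [hZX s (hT01.trans hs)]
      exact hdec s (hT01.trans hs)
    · intro x
      have := (((hasDerivAt_id x).const_mul Λ).exp).const_mul (C * Real.exp (-(κ * s)))
      refine this.congr_deriv ?_
      simp only [id, mul_one]; ring
    · intro x hx hxe
      have hb : ‖Z (s + x * Complex.I)‖ ≤ r := by
        rw [hxe]
        exact (hmono x ⟨hx.1, hx.2.le⟩).trans ((hT1 s hs).trans hδr)
      have hpos : 0 < ‖Z (s + x * Complex.I)‖ := by rw [hxe]; positivity
      rw [← hxe]
      generalize Z (s + x * Complex.I) = z at *
      rw [norm_smul, Complex.norm_I, one_mul]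
      have h1 : ‖((((-α : ℝ) : ℂ) * z.1, (β : ℂ) * z.2) : ℂ × ℂ)‖ ≤ (α + β) * ‖z‖ := by
        rw [Prod.norm_def]
        apply max_le
        · simp only [norm_mul, Complex.norm_real, norm_neg, Real.norm_of_nonneg hα.le]
          have := norm_fst_le z
          gcongr
          linarith
        · simp only [norm_mul, Complex.norm_real, Real.norm_of_nonneg hβ.le]
          have := norm_snd_le z
          gcongr
          linarith
      have h2 := hN1 z hb
      have h3 : K * ‖z‖ * ‖z‖ ≤ K * r * ‖z‖ := by gcongr
      refine (norm_add_le _ _).trans_lt ?_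
      rw [hΛ]
      linarith
  have stripδ : ∀ s : ℝ, T1 ≤ s → ∀ x ∈ Set.Icc 0 P, ‖Z (s + x * Complex.I)‖ ≤ δ :=
    fun s hs x hx => (strip s hs x hx).trans (hT1 s hs)
  have h0P : (0 : ℝ) ∈ Set.Icc 0 P := ⟨le_rfl, hP0.le⟩
  have hPP : P ∈ Set.Icc 0 P := ⟨hP0.le, le_rfl⟩
  have A1 : ∀ s : ℝ, T1 ≤ s → ‖Z (s + 0)‖ ≤ C' * Real.exp (-(κ * s)) := fun s hs => by
    simpa using strip s hs 0 h0P
  have A2 : ∀ s : ℝ, T1 ≤ s → ‖Z (s + P * Complex.I)‖ ≤ C' * Real.exp (-(κ * s)) := fun s hs =>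
    strip s hs P hPP
  -- the pair
  have hX : ∀ s, T1 ≤ s → HasDerivAt (fun s : ℝ => (Z (s + P * Complex.I)).1 - (Z (s + 0)).1)
      (((-α : ℝ) : ℂ) * ((Z (s + P * Complex.I)).1 - (Z (s + 0)).1) +
        (N (Z (s + P * Complex.I)) - N (Z (s + 0))).1) s := fun s _ => by
    refine ((hR1 (P * Complex.I) s).sub (hR1 0 s)).congr_deriv ?_
    simp only [Prod.fst_sub]; ring
  have hY : ∀ s, T1 ≤ s → HasDerivAt (fun s : ℝ => (Z (s + P * Complex.I)).2 - (Z (s + 0)).2)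
      ((β : ℂ) * ((Z (s + P * Complex.I)).2 - (Z (s + 0)).2) +
        (N (Z (s + P * Complex.I)) - N (Z (s + 0))).2) s := fun s _ => by
    refine ((hR2 (P * Complex.I) s).sub (hR2 0 s)).congr_deriv ?_
    simp only [Prod.snd_sub]; ring
  have hdiff : ∀ s : ℝ, T1 ≤ s → ‖N (Z (s + P * Complex.I)) - N (Z (s + 0))‖ ≤
      K * (C' * Real.exp (-(κ * s))) * ‖Z (s + P * Complex.I) - Z (s + 0)‖ := fun s hs => by
    have hle := (hT1 s hs).trans hδr
    refine (hq _ _ ((A2 s hs).trans hle) ((A1 s hs).trans hle)).trans ?_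
    gcongr
    exact max_le (A2 s hs) (A1 s hs)
  have hdiff2 : ∀ s : ℝ, T1 ≤ s → ‖N (Z (s + P * Complex.I)) - N (Z (s + 0))‖ ≤
      m / 4 * ‖Z (s + P * Complex.I) - Z (s + 0)‖ := fun s hs => by
    refine (hdiff s hs).trans ?_
    gcongr
    refine le_trans ?_ hδK
    gcongr
    exact hT1 s hs
  have hcone : ∀ s : ℝ, T1 ≤ s → ‖(Z (s + P * Complex.I)).2 - (Z (s + 0)).2‖ ≤
      ‖(Z (s + P * Complex.I)).1 - (Z (s + 0)).1‖ := fun s hs => by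
    refine cone (B := δ + δ) hm hmα hmβ hX hY
      (fun s hs => (norm_fst_le _).trans (hdiff2 s hs))
      (fun s hs => (norm_snd_le _).trans (hdiff2 s hs)) (fun s hs => ?_) s hs
    refine (norm_sub_le _ _).trans (add_le_add ?_ ?_)
    · exact (norm_snd_le _).trans ((A2 s hs).trans (hT1 s hs))
    · exact (norm_snd_le _).trans ((A1 s hs).trans (hT1 s hs))
  have hnorm : ∀ s : ℝ, T1 ≤ s → ‖Z (s + P * Complex.I) - Z (s + 0)‖ =
      ‖(Z (s + P * Complex.I)).1 - (Z (s + 0)).1‖ := fun s hs => by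
    rw [Prod.norm_def]
    exact max_eq_left (hcone s hs)
  have hXlim : Filter.Tendsto (fun s : ℝ => ‖(Z (s + P * Complex.I)).1 - (Z (s + 0)).1‖ *
      Real.exp (α * s)) Filter.atTop (nhds 0) := by
    have lim : Filter.Tendsto (fun s : ℝ => K * C' ^ 2 * P * Real.exp (-(α / 2 * s)))
        Filter.atTop (nhds 0) := by
      have : Filter.Tendsto (fun s : ℝ => K * C' ^ 2 * P * Real.exp (-(α / 2 * s))) Filter.atTop
          (nhds (K * C' ^ 2 * P * 0)) := by
        apply Filter.Tendsto.const_mul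
        exact Real.tendsto_exp_neg_atTop_nhds_zero.comp
          (Filter.tendsto_id.const_mul_atTop (half_pos hα))
      simpa using this
    refine squeeze_zero' (Filter.Eventually.of_forall fun s => by positivity) ?_ lim
    filter_upwards [Filter.eventually_ge_atTop T1] with s hs
    have hd : ∀ x : ℝ, HasDerivAt (fun x : ℝ => Complex.exp (α * (s + x * Complex.I)) *
        (Z (s + x * Complex.I)).1)
        (Complex.I * (Complex.exp (α * (s + x * Complex.I)) * (N (Z (s + x * Complex.I))).1)) x := by
      intro x
      have h1 : HasDerivAt (fun t : ℂ => Complex.exp (α * t) * (Z t).1)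
          (Complex.exp (α * (s + x * Complex.I)) * (N (Z (s + x * Complex.I))).1)
          (s + x * Complex.I) := by
        refine ((((hasDerivAt_id ((s : ℂ) + x * Complex.I)).const_mul (α : ℂ)).cexp).mul
          (hZ1 (s + x * Complex.I))).congr_deriv ?_
        simp only [id]; push_cast; ring
      exact h1.scomp x (hvert s x)
    have hne : ∀ x : ℝ, ‖Complex.exp (α * (s + x * Complex.I))‖ = Real.exp (α * s) := by
      intro x; rw [Complex.norm_exp]; simp
    have hmv := norm_image_sub_le_of_norm_deriv_le_segment' (a := 0) (b := P)
      (fun x _ => (hd x).hasDerivWithinAt) (C := Real.exp (α * s) *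
        (K * (C' * Real.exp (-(κ * s))) * (C' * Real.exp (-(κ * s))))) (by
        intro x hx
        rw [norm_mul, norm_mul, Complex.norm_I, one_mul, hne]
        have hx' : x ∈ Set.Icc 0 P := ⟨hx.1, hx.2.le⟩
        have hz := strip s hs x hx'
        gcongr
        refine (norm_fst_le _).trans ((hN1 _ (hz.trans ((hT1 s hs).trans hδr))).trans ?_)
        gcongr) P hPP
    have hper : Complex.exp (α * (s + P * Complex.I)) = Complex.exp (α * s) := by
      have : (α : ℂ) * (s + P * Complex.I) = α * s + 2 * Real.pi * Complex.I := by
        have hα' : (α : ℂ) ≠ 0 := by exact_mod_cast hα.ne'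
        rw [hP]; push_cast; field_simp
      rw [this, Complex.exp_periodic]
    rw [hper] at hmv
    simp only [Complex.ofReal_zero, zero_mul, sub_zero] at hmv
    rw [add_zero, ← mul_sub, norm_mul] at hmv
    have hne0 := hne 0
    simp only [Complex.ofReal_zero, zero_mul, add_zero] at hne0
    rw [hne0] at hmv
    rw [add_zero, mul_comm]
    refine hmv.trans (le_of_eq ?_)
    have : Real.exp (-(α / 2 * s)) = Real.exp (α * s) * Real.exp (-(κ * s)) * Real.exp (-(κ * s)) := by
      rw [← Real.exp_add, ← Real.exp_add]; congr 1; rw [hκ]; ring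
    rw [this]; ring
  have hX0 : ∀ s : ℝ, T1 ≤ s → (Z (s + P * Complex.I)).1 - (Z (s + 0)).1 = 0 := fun s hs =>
    lowerb (C := K * C') hκ0 (by positivity) hX (fun s hs => by
      rw [← hnorm s hs]
      refine (norm_fst_le _).trans ((hdiff s hs).trans (le_of_eq (by ring)))) hXlim s hs
  have hreal : ∀ s : ℝ, T1 ≤ s → Z (s + P * Complex.I) = Z s := fun s hs => by
    have := hnorm s hs
    rw [hX0 s hs, norm_zero, norm_eq_zero, sub_eq_zero, add_zero] at this
    exact this
  have hZd : Differentiable ℂ Z := fun t => (hZ t).differentiableAt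
  have hperiod : ∀ t, Z (t + P * Complex.I) = Z t := by
    have hd2 : Differentiable ℂ (fun t => Z (t + P * Complex.I)) := by fun_prop
    have := AnalyticOnNhd.eq_of_frequently_eq (z₀ := ((T1 + 1 : ℝ) : ℂ))
      (hd2.differentiableOn.analyticOnNhd isOpen_univ)
      (hZd.differentiableOn.analyticOnNhd isOpen_univ) (by
        have ht : Filter.Tendsto (fun s : ℝ => (s : ℂ)) (nhdsWithin (T1 + 1) {T1 + 1}ᶜ)
            (nhdsWithin ((T1 + 1 : ℝ) : ℂ) {((T1 + 1 : ℝ) : ℂ)}ᶜ) := by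
          apply Complex.continuous_ofReal.continuousAt.continuousWithinAt.tendsto_nhdsWithin
          intro s hs h
          exact hs (by simpa using Complex.ofReal_injective h)
        refine ht.frequently (Filter.Eventually.frequently ?_)
        have : ∀ᶠ s : ℝ in nhds (T1 + 1), T1 ≤ s := eventually_ge_nhds (by linarith)
        filter_upwards [nhdsWithin_le_nhds this] with s hs using hreal s hs)
    exact fun t => congrFun this t
  refine ⟨P, hP0, T1, δ, hperiod, fun t ht => ?_⟩
  obtain ⟨y, hy, hye⟩ := Function.Periodic.exists_mem_Ico₀ (f := fun y : ℝ => Z (t.re + y * Complex.I))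
    (c := P) (fun y => by
      have := hperiod (t.re + y * Complex.I)
      simp only
      rw [← this]; push_cast; congr 1; ring) hP0 t.im
  simp only [Complex.re_add_im] at hye
  rw [hye]
  exact stripδ t.re ht y ⟨hy.1, hy.2.le⟩

lemma side (f : EuclideanSpace ℂ (Fin 2) → EuclideanSpace ℂ (Fin 2))
    (hf : Differentiable ℂ f) (v : EuclideanSpace ℂ (Fin 2)) (hveq : f v = 0)
    (A : EuclideanSpace ℂ (Fin 2) →L[ℂ] EuclideanSpace ℂ (Fin 2))
    (hA : HasFDerivAt f A v) (α β : ℝ) (hα : 0 < α) (hβ : 0 < β)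
    (e₁ e₂ : EuclideanSpace ℂ (Fin 2)) (he₁ : e₁ ≠ 0) (he₂ : e₂ ≠ 0)
    (hA₁ : A e₁ = ((-α : ℝ) : ℂ) • e₁) (hA₂ : A e₂ = (β : ℂ) • e₂)
    (Γ : ℂ → EuclideanSpace ℂ (Fin 2)) (hode : ∀ t : ℂ, HasDerivAt Γ (f (Γ t)) t)
    (hlim : Filter.Tendsto (fun σ : ℝ => Γ σ) Filter.atTop (nhds v)) :
    ∃ P : ℝ, 0 < P ∧ ∃ T M : ℝ, (∀ t, Γ (t + P * Complex.I) = Γ t) ∧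
      ∀ t : ℂ, T ≤ t.re → ‖Γ t‖ ≤ M := by
  let L₀ : ℂ × ℂ →ₗ[ℂ] EuclideanSpace ℂ (Fin 2) :=
    (LinearMap.toSpanSingleton ℂ _ e₁).coprod (LinearMap.toSpanSingleton ℂ _ e₂)
  have hL₀ : ∀ z, L₀ z = z.1 • e₁ + z.2 • e₂ := fun z => by simp [L₀]
  have hinj : Function.Injective L₀ := by
    rw [injective_iff_map_eq_zero]
    intro z hz
    rw [hL₀] at hz
    have h2 := congrArg A hz
    rw [map_add, map_smul, map_smul, hA₁, hA₂, map_zero] at h2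
    have h3 : (((α + β : ℝ) : ℂ) * z.1) • e₁ = 0 := by
      have : (((α + β : ℝ) : ℂ) * z.1) • e₁ = (β : ℂ) • (z.1 • e₁ + z.2 • e₂) -
        (z.1 • ((-α : ℝ) : ℂ) • e₁ + z.2 • (β : ℂ) • e₂) := by
          push_cast; module
      rw [this, hz, h2]; simp
    have h4 : z.1 = 0 := by
      have hne : ((α + β : ℝ) : ℂ) ≠ 0 := by exact_mod_cast (by positivity : α + β ≠ 0)
      rcases smul_eq_zero.1 h3 with h | h
      · exact (mul_eq_zero.1 h).resolve_left hne
      · exact absurd h he₁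
    rw [h4, zero_smul, zero_add] at hz
    exact Prod.ext h4 ((smul_eq_zero.1 hz).resolve_right he₂)
  let L : (ℂ × ℂ) ≃L[ℂ] EuclideanSpace ℂ (Fin 2) :=
    (LinearEquiv.ofInjectiveOfFinrankEq L₀ hinj (by simp)).toContinuousLinearEquiv
  have hL : ∀ z, L z = z.1 • e₁ + z.2 • e₂ := fun z => hL₀ z
  let D : ℂ × ℂ →L[ℂ] ℂ × ℂ :=
    (((-α : ℝ) : ℂ) • ContinuousLinearMap.fst ℂ ℂ ℂ).prod ((β : ℂ) • ContinuousLinearMap.snd ℂ ℂ ℂ)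
  have hD : ∀ z, D z = (((-α : ℝ) : ℂ) * z.1, (β : ℂ) * z.2) := fun z => by simp [D]
  have hAL : ∀ z, A (L z) = L (D z) := fun z => by
    rw [hL, hL, hD, map_add, map_smul, map_smul, hA₁, hA₂]
    simp only
    module
  let N : ℂ × ℂ → ℂ × ℂ := fun z => L.symm (f (v + L z)) - D z
  have hNd : Differentiable ℂ N := by
    have : Differentiable ℂ (fun z => f (v + L z)) := hf.comp (L.differentiable.const_add v)
    exact (L.symm.differentiable.comp this).sub D.differentiable
  have hN' : HasFDerivAt N (0 : ℂ × ℂ →L[ℂ] ℂ × ℂ) 0 := by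
    have h1 : HasFDerivAt (fun z => v + L z) (L : (ℂ × ℂ) →L[ℂ] EuclideanSpace ℂ (Fin 2)) 0 :=
      L.hasFDerivAt.const_add v
    have h2 : HasFDerivAt f A (v + L 0) := by simpa using hA
    have h3 := (L.symm.hasFDerivAt.comp (0 : ℂ × ℂ) (h2.comp (0 : ℂ × ℂ) h1)).sub D.hasFDerivAt
    refine h3.congr_fderiv ?_
    refine ContinuousLinearMap.ext fun z => ?_
    simp [hAL]
  have hN0 : N 0 = 0 := by simp [N, hveq]
  obtain ⟨P, hP, T, M, hper, hbd⟩ := core α β hα hβ N hNd hN'.fderiv hN0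
    (fun t => L.symm (Γ t - v)) (fun t => by
      have h := L.symm.hasFDerivAt.comp_hasDerivAt t ((hode t).sub_const v)
      refine h.congr_deriv ?_
      rw [← hD]
      simp [N]) (by
      have : Filter.Tendsto (fun σ : ℝ => L.symm (Γ σ - v)) Filter.atTop (nhds (L.symm (v - v))) :=
        (L.symm.continuous.tendsto _).comp (hlim.sub_const v)
      simpa using this)
  refine ⟨P, hP, T, ‖(L : (ℂ × ℂ) →L[ℂ] EuclideanSpace ℂ (Fin 2))‖ * M + ‖v‖, fun t => ?_, fun t ht => ?_⟩
  · simpa using hper t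
  · have h1 : Γ t = (L : (ℂ × ℂ) →L[ℂ] EuclideanSpace ℂ (Fin 2)) (L.symm (Γ t - v)) + v := by simp
    rw [h1]
    refine (norm_add_le _ _).trans ?_
    gcongr
    refine (ContinuousLinearMap.le_opNorm _ _).trans ?_
    gcongr
    exact hbd t ht



/-- Planar case: complex entire homoclinic orbits to a hyperbolic saddle of a planar
complex entire vector field (real for real arguments) cannot exist: any such entire
connecting orbit is constant. -/
theorem no_complex_entire_homoclinic_planar
    (f : EuclideanSpace ℂ (Fin 2) → EuclideanSpace ℂ (Fin 2))
    (hf : Differentiable ℂ f)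
    (hfreal : ∀ x, IsRealPt x → IsRealPt (f x))
    (v : EuclideanSpace ℂ (Fin 2)) (hv : IsRealPt v) (hveq : f v = 0)
    (A : EuclideanSpace ℂ (Fin 2) →L[ℂ] EuclideanSpace ℂ (Fin 2))
    (hA : HasFDerivAt f A v)
    (μm μp : ℝ) (hμm : μm < 0) (hμp : 0 < μp)
    (heigm : Module.End.HasEigenvalue (A.toLinearMap : Module.End ℂ (EuclideanSpace ℂ (Fin 2))) (μm : ℂ))
    (heigp : Module.End.HasEigenvalue (A.toLinearMap : Module.End ℂ (EuclideanSpace ℂ (Fin 2))) (μp : ℂ))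
    (Γ : ℂ → EuclideanSpace ℂ (Fin 2))
    (hΓ : Differentiable ℂ Γ)
    (hΓreal : ∀ σ : ℝ, IsRealPt (Γ σ))
    (hode : ∀ t : ℂ, HasDerivAt Γ (f (Γ t)) t)
    (hlimp : Filter.Tendsto (fun σ : ℝ => Γ σ) Filter.atTop (nhds v))
    (hlimm : Filter.Tendsto (fun σ : ℝ => Γ σ) Filter.atBot (nhds v)) :
    ∀ t : ℂ, Γ t = v := by
  obtain ⟨em, hem⟩ := heigm.exists_hasEigenvector
  obtain ⟨ep, hep⟩ := heigp.exists_hasEigenvector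
  have hAm : A em = (μm : ℂ) • em := hem.apply_eq_smul
  have hAp : A ep = (μp : ℂ) • ep := hep.apply_eq_smul
  obtain ⟨P, hP, T, M, hper, hbd⟩ := side f hf v hveq A hA (-μm) μp (by linarith) hμp em ep
    hem.2 hep.2 (by rw [neg_neg]; exact hAm) hAp Γ hode hlimp
  obtain ⟨P', hP', T', M', hper', hbd'⟩ := side (fun x => -f x) hf.neg v (by simp [hveq]) (-A)
    hA.neg μp (-μm) hμp (by linarith) ep em hep.2 hem.2
    (by rw [neg_apply, hAp]; push_cast; module)
    (by rw [neg_apply, hAm]; push_cast; module)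
    (fun t => Γ (-t))
    (fun t => by
      have := (hode (-t)).scomp t (hasDerivAt_neg t)
      exact this.congr_deriv (by simp))
    (by
      have := hlimm.comp Filter.tendsto_neg_atTop_atBot
      refine this.congr fun s => ?_
      simp)
  obtain ⟨M₂, hM₂⟩ : ∃ M₂ : ℝ, ∀ z ∈ Set.Icc (-T') T ×ℂ Set.Icc 0 P, ‖Γ z‖ ≤ M₂ :=
    (isCompact_Icc.reProdIm isCompact_Icc).exists_bound_of_continuousOn hΓ.continuous.continuousOn
  have hbound : ∀ t, ‖Γ t‖ ≤ max M (max M' M₂) := by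
    intro t
    by_cases h1 : T ≤ t.re
    · exact (hbd t h1).trans (le_max_left _ _)
    by_cases h2 : t.re ≤ -T'
    · have := hbd' (-t) (by simp; linarith)
      rw [neg_neg] at this
      exact this.trans ((le_max_left _ _).trans (le_max_right _ _))
    push Not at h1 h2
    obtain ⟨y, hy, hye⟩ := Function.Periodic.exists_mem_Ico₀
      (f := fun y : ℝ => Γ (t.re + y * Complex.I)) (c := P) (fun y => by
        have := hper (t.re + y * Complex.I)
        simp only
        rw [← this]; push_cast; congr 1; ring) hP t.im
    simp only [Complex.re_add_im] at hye
    rw [hye]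
    refine (hM₂ _ ?_).trans ((le_max_right _ _).trans (le_max_right _ _))
    rw [Complex.mem_reProdIm]
    simp only [Complex.add_re, Complex.ofReal_re, Complex.mul_re, Complex.I_re, mul_zero,
      Complex.ofReal_im, Complex.I_im, mul_one, sub_self, add_zero, Complex.add_im,
      Complex.mul_im, zero_add]
    exact ⟨⟨h2.le, h1.le⟩, ⟨hy.1, hy.2.le⟩⟩
  have hconst : ∀ s t, Γ s = Γ t := by
    refine hΓ.apply_eq_apply_of_bounded ?_
    refine isBounded_iff_forall_norm_le.2 ⟨max M (max M' M₂), ?_⟩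
    rintro _ ⟨t, rfl⟩
    exact hbound t
  intro t
  refine tendsto_nhds_unique ?_ hlimp
  exact tendsto_const_nhds.congr fun s => hconst t s
end

section
/- Let Γ : ℂ → ℂ^N be complex entire, let ω ∈ ℝ, and let σ₀ ≤ σ₁ be real numbers. Assume: (a) for each i ∈ {0,1} the Fourier coefficient a_ω(σ_i), i.e. the limit of A_T(σ_i) as T → ∞, exists; (b) there exists a sequence T_n → ∞ of positive reals such that sup over σ ∈ [σ₀, σ₁] of (1/T_n)·e^{−ωσ}·‖e^{−iωT_n}Γ(σ + iT_n) − Γ(σ)‖ tends to 0 as n → ∞. Then the scaled Fourier coefficients coincide: e^{−ωσ₀}·a_ω(σ₀) = e^{−ωσ₁}·a_ω(σ₁). -/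
open Filter

/-- The finite-time vertical Fourier average
`A_T(σ) = (1/T) ∫₀ᵀ e^{-iωτ} Γ(σ + iτ) dτ`. -/
noncomputable def fourierAvg {N : ℕ} (Γ : ℂ → EuclideanSpace ℂ (Fin N)) (ω σ T : ℝ) :
    EuclideanSpace ℂ (Fin N) :=
  (1 / T : ℝ) • ∫ τ in (0:ℝ)..T,
    Complex.exp (-(Complex.I * ω * τ)) • Γ ((σ : ℂ) + (τ : ℂ) * Complex.I)

theorem scaled_avg_diff_bound
    (N : ℕ) (Γ : ℂ → EuclideanSpace ℂ (Fin N)) (hΓ : Differentiable ℂ Γ)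
    (ω σ₀ σ₁ : ℝ) (hσ : σ₀ ≤ σ₁) (T : ℝ) (hT : 0 < T) :
    ‖Real.exp (-(ω * σ₁)) • fourierAvg Γ ω σ₁ T - Real.exp (-(ω * σ₀)) • fourierAvg Γ ω σ₀ T‖ ≤
    (⨆ σ : Set.Icc σ₀ σ₁, (1 / T) * Real.exp (-(ω * (σ : ℝ))) *
        ‖Complex.exp (-(Complex.I * ω * T)) •
            Γ (((σ : ℝ) : ℂ) + (T : ℂ) * Complex.I) - Γ ((σ : ℝ) : ℂ)‖) * (σ₁ - σ₀) := by
  have hc : Continuous Γ := hΓ.continuous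
  set f : ℂ → EuclideanSpace ℂ (Fin N) := fun z => Complex.exp (-(ω * z)) • Γ z with hf
  have hfd : Differentiable ℂ f := by
    have h1 : Differentiable ℂ (fun z : ℂ => Complex.exp (-(ω * z))) := by fun_prop
    exact h1.smul hΓ
  have hfc : Continuous f := hfd.continuous
  have key : ∀ σ τ : ℝ, f ((σ : ℂ) + (τ : ℂ) * Complex.I) = Real.exp (-(ω * σ)) •
      (Complex.exp (-(Complex.I * ω * τ)) • Γ ((σ : ℂ) + (τ : ℂ) * Complex.I)) := by
    intro σ τ
    rw [← Complex.coe_smul, smul_smul, hf]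
    congr 1
    rw [Complex.ofReal_exp, ← Complex.exp_add]
    congr 1
    push_cast
    ring
  have key0 : ∀ σ : ℝ, f (σ : ℂ) = Real.exp (-(ω * σ)) • Γ (σ : ℂ) := by
    intro σ
    have := key σ 0
    simpa using this
  have havg : ∀ σ : ℝ, Real.exp (-(ω * σ)) • fourierAvg Γ ω σ T =
      (1 / T : ℝ) • ∫ τ in (0:ℝ)..T, f ((σ : ℂ) + (τ : ℂ) * Complex.I) := by
    intro σ
    simp only [key]
    rw [intervalIntegral.integral_smul, fourierAvg, smul_comm]
  have hrect := Complex.integral_boundary_rect_eq_zero_of_differentiableOn f (σ₀ : ℂ)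
    ((σ₁ : ℂ) + (T : ℂ) * Complex.I) hfd.differentiableOn
  simp only [Complex.ofReal_re, Complex.ofReal_im, Complex.add_re, Complex.add_im, Complex.mul_re,
    Complex.mul_im, Complex.I_re, Complex.I_im, mul_zero, mul_one, sub_zero, add_zero, zero_add,
    Complex.ofReal_zero, zero_mul] at hrect
  set S := ⨆ σ : Set.Icc σ₀ σ₁, (1 / T) * Real.exp (-(ω * (σ : ℝ))) *
        ‖Complex.exp (-(Complex.I * ω * T)) •
            Γ (((σ : ℝ) : ℂ) + (T : ℂ) * Complex.I) - Γ ((σ : ℝ) : ℂ)‖ with hS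
  have hbdd : BddAbove (Set.range fun σ : Set.Icc σ₀ σ₁ => (1 / T) * Real.exp (-(ω * (σ : ℝ))) *
        ‖Complex.exp (-(Complex.I * ω * T)) •
            Γ (((σ : ℝ) : ℂ) + (T : ℂ) * Complex.I) - Γ ((σ : ℝ) : ℂ)‖) := by
    apply IsCompact.bddAbove
    apply isCompact_range
    fun_prop
  have hpt : ∀ x ∈ Set.Icc σ₀ σ₁,
      ‖f ((x : ℂ) + (T : ℂ) * Complex.I) - f (x : ℂ)‖ ≤ T * S := by
    intro x hx
    have h := le_ciSup hbdd ⟨x, hx⟩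
    simp only at h
    rw [← hS] at h
    rw [key, key0, ← smul_sub, norm_smul, Real.norm_eq_abs, abs_of_pos (Real.exp_pos _)]
    have h2 := mul_le_mul_of_nonneg_left h hT.le
    refine le_trans (le_of_eq ?_) h2
    field_simp
  have hint := intervalIntegral.norm_integral_le_of_norm_le_const (a := σ₀) (b := σ₁)
    (C := T * S) (f := fun x : ℝ => f ((x : ℂ) + (T : ℂ) * Complex.I) - f (x : ℂ))
    (fun x hx => hpt x (by
      rw [Set.uIoc_of_le hσ] at hx
      exact ⟨hx.1.le, hx.2⟩))
  rw [intervalIntegral.integral_sub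
    (Continuous.intervalIntegrable (by fun_prop) _ _)
    (Continuous.intervalIntegrable (by fun_prop) _ _), abs_of_nonneg (sub_nonneg.2 hσ)] at hint
  rw [havg, havg, ← smul_sub, norm_smul, Real.norm_eq_abs, abs_of_pos (by positivity)]
  have heq : Complex.I • ((∫ τ in (0:ℝ)..T, f ((σ₁ : ℂ) + (τ : ℂ) * Complex.I)) -
      ∫ τ in (0:ℝ)..T, f ((σ₀ : ℂ) + (τ : ℂ) * Complex.I)) =
      (∫ x in σ₀..σ₁, f ((x : ℂ) + (T : ℂ) * Complex.I)) - ∫ x in σ₀..σ₁, f (x : ℂ) := by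
    rw [smul_sub, ← sub_eq_zero, ← hrect]
    abel
  have hn := congrArg norm heq
  rw [norm_smul, Complex.norm_I, one_mul] at hn
  rw [hn]
  calc _ ≤ (1 / T) * (T * S * (σ₁ - σ₀)) := by gcongr
    _ = _ := by field_simp

/-- Invariance of the scaled Fourier coefficients: if the vertical Fourier coefficients
`a_ω(σ₀)`, `a_ω(σ₁)` of a complex entire `Γ` exist, and along some sequence `Tₙ → ∞` the
horizontal boundary contributions tend to zero uniformly on `[σ₀, σ₁]`, then
`e^{-ωσ₀} a_ω(σ₀) = e^{-ωσ₁} a_ω(σ₁)`. -/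
theorem scaled_fourier_coefficient_invariant
    (N : ℕ) (Γ : ℂ → EuclideanSpace ℂ (Fin N)) (hΓ : Differentiable ℂ Γ)
    (ω σ₀ σ₁ : ℝ) (hσ : σ₀ ≤ σ₁)
    (a₀ a₁ : EuclideanSpace ℂ (Fin N))
    (ha₀ : Tendsto (fun T : ℝ => fourierAvg Γ ω σ₀ T) atTop (nhds a₀))
    (ha₁ : Tendsto (fun T : ℝ => fourierAvg Γ ω σ₁ T) atTop (nhds a₁))
    (T : ℕ → ℝ) (hTpos : ∀ n, 0 < T n) (hT : Tendsto T atTop atTop)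
    (hbound : Tendsto (fun n : ℕ =>
      ⨆ σ : Set.Icc σ₀ σ₁, (1 / T n) * Real.exp (-(ω * (σ : ℝ))) *
        ‖Complex.exp (-(Complex.I * ω * T n)) •
            Γ (((σ : ℝ) : ℂ) + (T n : ℂ) * Complex.I) - Γ ((σ : ℝ) : ℂ)‖)
      atTop (nhds 0)) :
    Real.exp (-(ω * σ₀)) • a₀ = Real.exp (-(ω * σ₁)) • a₁ := by
  have h1 := ((ha₁.comp hT).const_smul (Real.exp (-(ω * σ₁)))).sub
    ((ha₀.comp hT).const_smul (Real.exp (-(ω * σ₀))))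
  have h2 := hbound.mul_const (σ₁ - σ₀)
  rw [zero_mul] at h2
  have h3 := squeeze_zero_norm
    (fun n => scaled_avg_diff_bound N Γ hΓ ω σ₀ σ₁ hσ (T n) (hTpos n)) h2
  have h4 := tendsto_nhds_unique h1 h3
  exact (sub_eq_zero.1 h4).symm
end

section
/- Let Γ : ℂ → ℂ^N be complex entire, let ω ∈ ℝ, let σ₀ ≤ σ₁ be real numbers, and let T > 0. Then ‖e^{−ωσ₁}·A_T(σ₁) − e^{−ωσ₀}·A_T(σ₀)‖ ≤ (σ₁ − σ₀) · sup over σ ∈ [σ₀, σ₁] of (1/T)·e^{−ωσ}·‖e^{−iωT}Γ(σ + iT) − Γ(σ)‖. (This follows from Cauchy's theorem applied to the entire integrand e^{−ωt}Γ(t) on the rectangle with corners σ₀, σ₁, σ₁ + iT, σ₀ + iT.) -/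
/-- Cauchy rectangle estimate for the scaled finite-time Fourier averages of a complex
entire map: the difference of `e^{-ωσ} A_T(σ)` at `σ = σ₀, σ₁` is controlled by the
supremum of the horizontal boundary contributions. -/
theorem scaled_fourierAvg_difference_bound
    (N : ℕ) (Γ : ℂ → EuclideanSpace ℂ (Fin N)) (hΓ : Differentiable ℂ Γ)
    (ω σ₀ σ₁ : ℝ) (hσ : σ₀ ≤ σ₁) (T : ℝ) (hT : 0 < T) :
    ‖Real.exp (-(ω * σ₁)) • fourierAvg Γ ω σ₁ T -
        Real.exp (-(ω * σ₀)) • fourierAvg Γ ω σ₀ T‖ ≤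
      (σ₁ - σ₀) * ⨆ σ : Set.Icc σ₀ σ₁, (1 / T) * Real.exp (-(ω * (σ : ℝ))) *
        ‖Complex.exp (-(Complex.I * ω * T)) •
            Γ (((σ : ℝ) : ℂ) + (T : ℂ) * Complex.I) - Γ ((σ : ℝ) : ℂ)‖ := by
  set f : ℂ → EuclideanSpace ℂ (Fin N) := fun z => Complex.exp (-(ω * z)) • Γ z with hf
  have hfd : Differentiable ℂ f := by
    rw [hf]; fun_prop
  have hfc : Continuous f := hfd.continuous
  have hvert : ∀ σ : ℝ, Real.exp (-(ω * σ)) • fourierAvg Γ ω σ T =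
      (1 / T : ℝ) • ∫ y in (0:ℝ)..T, f (σ + y * Complex.I) := by
    intro σ
    unfold fourierAvg
    rw [smul_comm, ← intervalIntegral.integral_smul]
    congr 1
    apply intervalIntegral.integral_congr
    intro y _
    simp only [hf]
    rw [← Complex.coe_smul (Real.exp _), smul_smul, Complex.ofReal_exp, ← Complex.exp_add]
    congr 2
    push_cast
    ring
  have hC := Complex.integral_boundary_rect_eq_zero_of_differentiableOn f (σ₀ : ℂ)
    (σ₁ + T * Complex.I) hfd.differentiableOn
  simp only [Complex.ofReal_re, Complex.ofReal_im, Complex.add_re, Complex.add_im, Complex.mul_re,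
    Complex.mul_im, Complex.I_re, Complex.I_im, mul_zero, mul_one, zero_mul, sub_zero, add_zero,
    zero_add, Complex.ofReal_zero] at hC
  have hint1 : IntervalIntegrable (fun x : ℝ => f x) MeasureTheory.volume σ₀ σ₁ :=
    Continuous.intervalIntegrable (by fun_prop) _ _
  have hint2 : IntervalIntegrable (fun x : ℝ => f (x + T * Complex.I))
      MeasureTheory.volume σ₀ σ₁ :=
    Continuous.intervalIntegrable (by fun_prop) _ _
  have hkey : ‖(∫ y in (0:ℝ)..T, f (σ₁ + y * Complex.I)) -
      ∫ y in (0:ℝ)..T, f (σ₀ + y * Complex.I)‖ =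
      ‖∫ x in σ₀..σ₁, (f (x + T * Complex.I) - f x)‖ := by
    rw [intervalIntegral.integral_sub hint2 hint1]
    have h2 : Complex.I • ((∫ y in (0:ℝ)..T, f (σ₁ + y * Complex.I)) -
      ∫ y in (0:ℝ)..T, f (σ₀ + y * Complex.I)) =
        (∫ x in σ₀..σ₁, f (x + T * Complex.I)) - ∫ x in σ₀..σ₁, f x := by
      rw [smul_sub, ← sub_eq_zero, ← hC]
      abel
    rw [← h2, norm_smul, Complex.norm_I, one_mul]
  set g : ℝ → ℝ := fun σ => (1 / T) * Real.exp (-(ω * σ)) *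
        ‖Complex.exp (-(Complex.I * ω * T)) •
            Γ ((σ : ℂ) + (T : ℂ) * Complex.I) - Γ (σ : ℂ)‖ with hg
  have hΓc := hΓ.continuous
  have hgc : Continuous g := by
    rw [hg]; fun_prop
  have hbdd : BddAbove (Set.range fun σ : Set.Icc σ₀ σ₁ => g σ) := by
    have := (isCompact_Icc (a := σ₀) (b := σ₁)).bddAbove_image hgc.continuousOn
    rwa [Set.image_eq_range] at this
  have hnorm : ∀ x : ℝ, ‖f (x + T * Complex.I) - f x‖ = T * g x := by
    intro x
    have h3 : f (x + T * Complex.I) - f x = Complex.exp (((-(ω * x) : ℝ)) : ℂ) •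
        (Complex.exp (-(Complex.I * ω * T)) • Γ ((x : ℂ) + (T : ℂ) * Complex.I) - Γ (x : ℂ)) := by
      simp only [hf]
      rw [smul_sub, smul_smul, ← Complex.exp_add]
      congr 3
      · push_cast
        ring
      · push_cast
        ring
    rw [h3, norm_smul, ← Complex.ofReal_exp, Complex.norm_real, Real.norm_of_nonneg (Real.exp_pos _).le]
    simp only [hg]
    field_simp
  rw [hvert, hvert, ← smul_sub, norm_smul, hkey, Real.norm_of_nonneg (by positivity)]
  have hb := intervalIntegral.norm_integral_le_of_norm_le_const (a := σ₀) (b := σ₁)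
    (f := fun x : ℝ => f (x + T * Complex.I) - f x)
    (C := T * ⨆ σ : Set.Icc σ₀ σ₁, g σ) (by
      intro x hx
      rw [Set.uIoc_of_le hσ] at hx
      rw [hnorm]
      exact mul_le_mul_of_nonneg_left (le_ciSup hbdd ⟨x, Set.Ioc_subset_Icc_self hx⟩) hT.le)
  rw [abs_of_nonneg (sub_nonneg.2 hσ)] at hb
  calc _ ≤ (1 / T) * (T * (⨆ σ : Set.Icc σ₀ σ₁, g σ) * (σ₁ - σ₀)) :=
        mul_le_mul_of_nonneg_left hb (by positivity)
    _ = (σ₁ - σ₀) * ⨆ σ : Set.Icc σ₀ σ₁, g σ := by field_simp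
end

section
/- Let Γ : ℂ → ℂ^N be complex entire and let v⁻, v⁺ ∈ ℂ^N. Assume: (i) Γ(σ + iτ) → v⁻ as σ → −∞, uniformly in τ ∈ ℝ; (ii) Γ(σ + iτ) → v⁺ as σ → +∞, uniformly in τ ∈ ℝ; (iii) Γ is bounded on every vertical strip {t ∈ ℂ : a ≤ Re t ≤ b} with a ≤ b real. Then Γ is constant; in particular v⁻ = v⁺. (This is the complex-analytic core of the nonexistence of complex entire heteroclinic orbits: the value of the vertical average of Γ is independent of Re t and equals both asymptotic limits.) -/
/-- A complex entire map `Γ : ℂ → ℂ^N` with limits `v⁻` (as `Re t → -∞`) and `v⁺`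
(as `Re t → +∞`), uniformly in the imaginary part, and bounded on every vertical strip,
is constant; in particular `v⁻ = v⁺`. -/
theorem entire_uniform_heteroclinic_constant
    (N : ℕ) (Γ : ℂ → EuclideanSpace ℂ (Fin N)) (hΓ : Differentiable ℂ Γ)
    (vm vp : EuclideanSpace ℂ (Fin N))
    (hlimm : ∀ ε : ℝ, 0 < ε → ∃ σm : ℝ, ∀ σ : ℝ, σ ≤ σm → ∀ τ : ℝ,
      ‖Γ ((σ : ℂ) + (τ : ℂ) * Complex.I) - vm‖ < ε)
    (hlimp : ∀ ε : ℝ, 0 < ε → ∃ σp : ℝ, ∀ σ : ℝ, σp ≤ σ → ∀ τ : ℝ,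
      ‖Γ ((σ : ℂ) + (τ : ℂ) * Complex.I) - vp‖ < ε)
    (hbdd : ∀ a b : ℝ, a ≤ b → ∃ C : ℝ, ∀ t : ℂ, a ≤ t.re → t.re ≤ b → ‖Γ t‖ ≤ C) :
    (∀ s t : ℂ, Γ s = Γ t) ∧ vm = vp := by
  obtain ⟨σm, hm⟩ := hlimm 1 one_pos
  obtain ⟨σp, hp⟩ := hlimp 1 one_pos
  obtain ⟨C, hC⟩ := hbdd (min σm σp) (max σm σp) min_le_max
  have hconst : ∀ s t : ℂ, Γ s = Γ t := by
    apply hΓ.apply_eq_apply_of_bounded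
    rw [isBounded_iff_forall_norm_le]
    refine ⟨max C (max (‖vm‖ + 1) (‖vp‖ + 1)), ?_⟩
    rintro _ ⟨t, rfl⟩
    rcases le_total t.re σm with h1 | h1
    · have h := hm t.re h1 t.im
      rw [Complex.re_add_im] at h
      have h3 := norm_le_norm_add_norm_sub' (Γ t) vm
      exact le_max_of_le_right (le_max_of_le_left (by linarith))
    · rcases le_total σp t.re with h2 | h2
      · have h := hp t.re h2 t.im
        rw [Complex.re_add_im] at h
        have h3 := norm_le_norm_add_norm_sub' (Γ t) vp
        exact le_max_of_le_right (le_max_of_le_right (by linarith))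
      · exact le_max_of_le_left
          (hC t ((min_le_left _ _).trans h1) (h2.trans (le_max_right _ _)))
  refine ⟨hconst, ?_⟩
  have e1 : Γ 0 = vm := by
    refine eq_of_forall_dist_le fun ε hε => ?_
    obtain ⟨σ, h⟩ := hlimm ε hε
    rw [dist_eq_norm, hconst 0 ((σ : ℂ) + ((0 : ℝ) : ℂ) * Complex.I)]
    exact (h σ le_rfl 0).le
  have e2 : Γ 0 = vp := by
    refine eq_of_forall_dist_le fun ε hε => ?_
    obtain ⟨σ, h⟩ := hlimp ε hε
    rw [dist_eq_norm, hconst 0 ((σ : ℂ) + ((0 : ℝ) : ℂ) * Complex.I)]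
    exact (h σ le_rfl 0).le
  exact e1.symm.trans e2
end

section
/- Let q : ℝ → ℝ be continuous and let h : ℝ → ℝ be differentiable with h'(x) = −2·h(x) + q(x) for all x ∈ ℝ. Let z : ℝ → ℝ be twice differentiable with z''(t) + z'(t)² + q(z(t)) = 0 for all t ∈ ℝ, and define H(t) := (1/2)·z'(t)² + h(z(t)). Then H'(t) = −2·z'(t)·H(t) for all t, and consequently H(t)·e^{2z(t)} is constant in t; equivalently H(t) = H(t₀)·e^{−2(z(t) − z(t₀))} for all t, t₀ ∈ ℝ. In particular, if z(t₀) = a, z'(t₀) = 0, and h(a) = 0 for some t₀, then H ≡ 0, so H = (1/2)ż² + h(z) is a conserved quantity vanishing along the orbit through (a, 0). -/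
/-- First integral construction for the time reversible equation `z̈ + ż² + q(z) = 0`:
with `h' = -2h + q` and `H = (1/2)ż² + h(z)` one has `H' = -2żH`, hence `H e^{2z}` is
constant; if moreover the orbit passes through `(a, 0)` with `h(a) = 0`, then `H ≡ 0`. -/
theorem reversible_first_integral
    (q h : ℝ → ℝ) (hq : Continuous q)
    (hh : ∀ x : ℝ, HasDerivAt h (-2 * h x + q x) x)
    (z : ℝ → ℝ) (hz : Differentiable ℝ z) (hz' : Differentiable ℝ (deriv z))
    (hode : ∀ t : ℝ, deriv (deriv z) t + (deriv z t) ^ 2 + q (z t) = 0)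
    (H : ℝ → ℝ) (hH : ∀ t : ℝ, H t = (1/2) * (deriv z t) ^ 2 + h (z t)) :
    (∀ t : ℝ, HasDerivAt H (-2 * deriv z t * H t) t) ∧
    (∀ t t₀ : ℝ, H t * Real.exp (2 * z t) = H t₀ * Real.exp (2 * z t₀)) ∧
    (∀ t t₀ : ℝ, H t = H t₀ * Real.exp (-2 * (z t - z t₀))) ∧
    (∀ (t₀ a : ℝ), z t₀ = a → deriv z t₀ = 0 → h a = 0 → ∀ t : ℝ, H t = 0) := by
  have h1 : ∀ t : ℝ, HasDerivAt H (-2 * deriv z t * H t) t := by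
    intro t
    have e : H = fun t => (1/2) * (deriv z t) ^ 2 + h (z t) := funext hH
    have d1 := (((hz' t).hasDerivAt.fun_pow 2).const_mul (1/2 : ℝ))
    have d2 := (hh (z t)).comp t (hz t).hasDerivAt
    have d3 := d1.fun_add d2
    have hv : -2 * deriv z t * H t = 1 / 2 * (((2 : ℕ) : ℝ) * deriv z t ^ (2 - 1)
        * deriv (deriv z) t) + (-2 * h (z t) + q (z t)) * deriv z t := by
      rw [hH t]
      have := hode t
      push_cast
      simp only [Nat.add_one_sub_one, pow_one]
      linear_combination (-deriv z t) * this
    rw [hv, e]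
    exact d3
  have h2 : ∀ t t₀ : ℝ, H t * Real.exp (2 * z t) = H t₀ * Real.exp (2 * z t₀) := by
    have d : ∀ t : ℝ, HasDerivAt (fun t => H t * Real.exp (2 * z t)) 0 t := by
      intro t
      have d4 := (h1 t).fun_mul (((hz t).hasDerivAt.const_mul 2).exp)
      have e0 : -2 * deriv z t * H t * Real.exp (2 * z t)
          + H t * (Real.exp (2 * z t) * (2 * deriv z t)) = 0 := by ring
      rw [← e0]
      exact d4
    intro t t₀
    exact is_const_of_deriv_eq_zero (fun t => (d t).differentiableAt) (fun t => (d t).deriv) t t₀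
  have h3 : ∀ t t₀ : ℝ, H t = H t₀ * Real.exp (-2 * (z t - z t₀)) := by
    intro t t₀
    have e : -2 * (z t - z t₀) = 2 * z t₀ - 2 * z t := by ring
    rw [e, Real.exp_sub, ← mul_div_assoc, ← h2 t t₀]
    field_simp
  refine ⟨h1, h2, h3, ?_⟩
  intro t₀ a hz0 hd ha t
  rw [h3 t t₀, hH t₀, hz0, hd, ha]
  simp
end

section
/- Let z : ℝ → ℝ be twice continuously differentiable with z''(t) + z'(t)² + z(t)² − 3·z(t) = 0 for all t ∈ ℝ, and suppose z(σ) → 0 and z'(σ) → 0 as σ → −∞. Then for every t ∈ ℝ: (1/2)·z'(t)² = e^{−2z(t)} − 1 + 2·z(t) − (1/2)·z(t)². In particular, the homoclinic orbit of z̈ + ż² + z² − 3z = 0 to the hyperbolic equilibrium z = 0 lies on the zero level set of the first integral H = (1/2)ż² − (e^{−2z} − 1 + 2z − (1/2)z²). -/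
/-- The homoclinic orbit of `z̈ + ż² + z² - 3z = 0` to the hyperbolic equilibrium `z = 0`
lies on the zero level of the first integral:
`(1/2)ż² = e^{-2z} - 1 + 2z - (1/2)z²`. -/
theorem reversible_homoclinic_integral
    (z : ℝ → ℝ) (hz : ContDiff ℝ 2 z)
    (hode : ∀ t : ℝ, deriv (deriv z) t + (deriv z t) ^ 2 + (z t) ^ 2 - 3 * z t = 0)
    (hlim : Filter.Tendsto z Filter.atBot (nhds 0))
    (hlim' : Filter.Tendsto (deriv z) Filter.atBot (nhds 0)) :
    ∀ t : ℝ, (1/2) * (deriv z t) ^ 2 =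
      Real.exp (-2 * z t) - 1 + 2 * z t - (1/2) * (z t) ^ 2 := by
  have h1 : ∀ t, HasDerivAt z (deriv z t) t := fun t =>
    (hz.differentiable (by norm_num) t).hasDerivAt
  have hz' : ContDiff ℝ 1 (deriv z) := by
    have h : ContDiff ℝ (1 + 1) z := by
      have e : (1 + 1 : WithTop ℕ∞) = 2 := by norm_num
      rw [e]; exact hz
    exact (contDiff_succ_iff_deriv.1 h).2.2
  have h2 : ∀ t, HasDerivAt (deriv z) (deriv (deriv z) t) t := fun t =>
    (hz'.differentiable (by norm_num) t).hasDerivAt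
  let G : ℝ → ℝ := fun t =>
    Real.exp (2 * z t) * ((1/2) * (deriv z t) ^ 2 + (1/2) * (z t) ^ 2 - 2 * z t + 1)
  have hG : ∀ t, HasDerivAt G 0 t := by
    intro t
    have h := (((h1 t).const_mul 2).exp).mul
      ((((((h2 t).pow 2).const_mul (1/2)).add (((h1 t).pow 2).const_mul (1/2))).sub
        ((h1 t).const_mul 2)).add_const 1)
    refine h.congr_deriv ?_
    have := hode t
    have e : deriv (deriv z) t = 3 * z t - (z t) ^ 2 - (deriv z t) ^ 2 := by linarith
    rw [e]
    simp
    ring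
  have hc : ∀ s t, G s = G t := fun s t =>
    is_const_of_deriv_eq_zero (fun t => (hG t).differentiableAt) (fun t => (hG t).deriv) s t
  have hl : Filter.Tendsto G Filter.atBot (nhds 1) := by
    have h := ((Real.continuous_exp.tendsto _).comp (hlim.const_mul 2)).mul
      (((((hlim'.pow 2).const_mul (1/2)).add ((hlim.pow 2).const_mul (1/2))).sub
        (hlim.const_mul 2)).add_const 1)
    have e : Real.exp (2 * 0) * (1 / 2 * 0 ^ 2 + 1 / 2 * 0 ^ 2 - 2 * 0 + 1) = 1 := by simp
    rw [e] at h
    exact h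
  intro t
  have hGt : G t = 1 := by
    have : Filter.Tendsto G Filter.atBot (nhds (G t)) :=
      tendsto_const_nhds.congr (fun s => hc t s)
    exact tendsto_nhds_unique this hl
  have hm : Real.exp (-2 * z t) * Real.exp (2 * z t) = 1 := by
    rw [← Real.exp_add]; simp
  have hk : Real.exp (2 * z t) *
    ((1/2) * (deriv z t) ^ 2 + (1/2) * (z t) ^ 2 - 2 * z t + 1) = 1 := hGt
  have : (1/2) * (deriv z t) ^ 2 + (1/2) * (z t) ^ 2 - 2 * z t + 1 = Real.exp (-2 * z t) := by
    apply mul_left_cancel₀ (Real.exp_pos (2 * z t)).ne'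
    rw [hk, mul_comm, hm]
  linarith
end

section
/- Let H : ℝ × ℝ → ℝ be continuously differentiable, with partial derivatives H_x (in the first variable) and H_p (in the second variable), and assume H_p(x, p) ≠ 0 for all (x, p). Let λ ∈ ℝ, and let z : ℝ → ℝ be twice differentiable such that, writing p(t) := (1/2)·z'(t)², the damped equation z''(t) + (H(z(t), p(t)) − λ)·z'(t)/H_p(z(t), p(t)) + H_x(z(t), p(t))/H_p(z(t), p(t)) = 0 holds for all t ∈ ℝ. Then for all t: d/dt [H(z(t), p(t))] = (λ − H(z(t), p(t)))·z'(t)². In particular, H relaxes monotonically towards the level set {H = λ} along solutions. -/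
/-- Relaxation identity for the damped embedding
`z̈ + (H - λ)ż/H_p + H_x/H_p = 0` of a pendulum with first integral `H(z, (1/2)ż²)`:
along solutions, `d/dt H(z, (1/2)ż²) = (λ - H)ż²`; in particular `H` relaxes towards
the level set `{H = λ}`. -/
theorem damped_embedding_relaxation
    (H Hx Hp : ℝ → ℝ → ℝ)
    (hH : ∀ x p : ℝ, HasFDerivAt (fun q : ℝ × ℝ => H q.1 q.2)
      (Hx x p • ContinuousLinearMap.fst ℝ ℝ ℝ + Hp x p • ContinuousLinearMap.snd ℝ ℝ ℝ)
      (x, p))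
    (hHxc : Continuous fun q : ℝ × ℝ => Hx q.1 q.2)
    (hHpc : Continuous fun q : ℝ × ℝ => Hp q.1 q.2)
    (hHp : ∀ x p : ℝ, Hp x p ≠ 0)
    (lam : ℝ) (z : ℝ → ℝ)
    (hz : Differentiable ℝ z) (hz' : Differentiable ℝ (deriv z))
    (hode : ∀ t : ℝ, deriv (deriv z) t +
      (H (z t) ((1/2) * (deriv z t) ^ 2) - lam) * deriv z t /
        Hp (z t) ((1/2) * (deriv z t) ^ 2) +
      Hx (z t) ((1/2) * (deriv z t) ^ 2) / Hp (z t) ((1/2) * (deriv z t) ^ 2) = 0) :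
    ∀ t : ℝ, HasDerivAt (fun s : ℝ => H (z s) ((1/2) * (deriv z s) ^ 2))
      ((lam - H (z t) ((1/2) * (deriv z t) ^ 2)) * (deriv z t) ^ 2) t := by
  intro t
  have h1 : HasDerivAt z (deriv z t) t := (hz t).hasDerivAt
  have h2 : HasDerivAt (deriv z) (deriv (deriv z) t) t := (hz' t).hasDerivAt
  have h3 : HasDerivAt (fun s : ℝ => (1/2) * (deriv z s) ^ 2)
      (deriv z t * deriv (deriv z) t) t := by
    refine ((h2.pow 2).const_mul (1/2 : ℝ)).congr_deriv ?_
    push_cast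
    ring
  have h4 := (hH (z t) ((1/2) * (deriv z t) ^ 2)).comp_hasDerivAt t (h1.prodMk h3)
  have ho := hode t
  have hp := hHp (z t) ((1/2) * (deriv z t) ^ 2)
  refine HasDerivAt.congr_deriv h4 ?_
  simp only [add_apply, smul_apply,
    ContinuousLinearMap.coe_fst', ContinuousLinearMap.coe_snd', smul_eq_mul]
  generalize Hp (z t) ((1/2) * (deriv z t) ^ 2) = P at *
  generalize Hx (z t) ((1/2) * (deriv z t) ^ 2) = X at *
  generalize H (z t) ((1/2) * (deriv z t) ^ 2) = h at *
  have ho' : P * deriv (deriv z) t + (h - lam) * deriv z t + X = 0 := by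
    field_simp at ho
    linarith
  linear_combination deriv z t * ho'
end
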